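/- Let F be a (possibly unbalanced) double-well potential and let c > 0. Then: (i) for every α ∈ [0,1) and K ∈ ℝ there is no C³ solution u : ℝ² → ℝ of Δu + c ∂u/∂y = F'(u) with |u| ≤ 1 and ∂u/∂y > 0 everywhere such that lim_{y→+∞} u(x,y) = 1 and lim_{y→−∞} u(x,y) = g_α(x − K) for every x; (ii) if moreover F(1) > 0, then for every K ∈ ℝ there is no such solution with lim_{y→+∞} u(x,y) = 1 and lim_{y→−∞} u(x,y) = g_*(x − K) for every x. -/

import Mathlib

open Real Filter MeasureTheory Metric

noncomputable def pdx (u : ℝ → ℝ → ℝ) (x y : ℝ) : ℝ := deriv (fun t => u t y) x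

noncomputable def pdy (u : ℝ → ℝ → ℝ) (x y : ℝ) : ℝ := deriv (fun t => u x t) y

noncomputable def pdxx (u : ℝ → ℝ → ℝ) (x y : ℝ) : ℝ := deriv (fun t => pdx u t y) x

noncomputable def pdyy (u : ℝ → ℝ → ℝ) (x y : ℝ) : ℝ := deriv (fun t => pdy u x t) y

/-- `F` is a (possibly unbalanced) double-well potential. -/
def DoubleWell (F : ℝ → ℝ) : Prop :=
  ContDiff ℝ 3 F ∧ deriv F (-1) = 0 ∧ deriv F 1 = 0 ∧
  0 < deriv (deriv F) (-1) ∧ 0 < deriv (deriv F) 1 ∧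
  (∀ s ∈ Set.Ioo (-1 : ℝ) 0, 0 < deriv F s) ∧
  (∀ s ∈ Set.Ioo (0 : ℝ) 1, deriv F s < 0) ∧
  F (-1) = 0

/-- `u` is a `C³` solution of `Δu + c uᵧ = F'(u)` on `ℝ²` with `|u| ≤ 1`
which is monotone in `y`. -/
def IsSolution (F : ℝ → ℝ) (c : ℝ) (u : ℝ → ℝ → ℝ) : Prop :=
  ContDiff ℝ 3 (fun p : ℝ × ℝ => u p.1 p.2) ∧
  (∀ x y : ℝ, pdxx u x y + pdyy u x y + c * pdy u x y = deriv F (u x y)) ∧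
  (∀ x y : ℝ, |u x y| ≤ 1) ∧
  (∀ x y : ℝ, 0 < pdy u x y)

/-- A monotone traveling wave solution connecting `-1` to `1`. -/
def IsTravelingWave (F : ℝ → ℝ) (c : ℝ) (u : ℝ → ℝ → ℝ) : Prop :=
  IsSolution F c u ∧
  (∀ x : ℝ, Tendsto (fun y => u x y) atTop (nhds 1)) ∧
  (∀ x : ℝ, Tendsto (fun y => u x y) atBot (nhds (-1)))

/-- `wx`, `wy`, `wxx`, `wyy` are the partial derivatives `∂ₓw`, `∂ᵧw`, `∂ₓ²w`, `∂ᵧ²w` of a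
continuous function `w` on the plane. -/
structure HasSecondPartials (w wx wy wxx wyy : ℝ → ℝ → ℝ) : Prop where
  cont : Continuous fun p : ℝ × ℝ => w p.1 p.2
  hx : ∀ x y, HasDerivAt (fun t => w t y) (wx x y) x
  hy : ∀ x y, HasDerivAt (fun t => w x t) (wy x y) y
  hxx : ∀ x y, HasDerivAt (fun t => wx t y) (wxx x y) x
  hyy : ∀ x y, HasDerivAt (fun t => wy x t) (wyy x y) y

lemma IsLocalMin.second_deriv_nonneg {f f' : ℝ → ℝ} {f'' x : ℝ} (h : IsLocalMin f x)
    (hf : ∀ t, HasDerivAt f (f' t) t) (hf' : HasDerivAt f' f'' x) : 0 ≤ f'' := by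
  by_contra! hneg
  have hd : deriv f = f' := funext fun t => (hf t).deriv
  have hdd : deriv (deriv f) x = f'' := by rw [hd, hf'.deriv]
  have hmax : IsLocalMax f x :=
    isLocalMax_of_deriv_deriv_neg (by rwa [hdd]) h.deriv_eq_zero (hf x).continuousAt
  have hconst : f =ᶠ[nhds x] fun _ => f x := by
    filter_upwards [h, hmax] with t ht ht'
    exact le_antisymm ht' ht
  have : deriv (deriv f) x = 0 := by
    rw [hconst.deriv.deriv_eq]
    simp
  linarith

/-- Weak maximum principle on the rectangle `[0,1] × [-1,1]` for the operator `Δ + d ∂ᵧ`. -/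
lemma HasSecondPartials.nonneg_of_supersolution {z zx zy zxx zyy : ℝ → ℝ → ℝ}
    (hz : HasSecondPartials z zx zy zxx zyy) {d : ℝ}
    (hL : ∀ x y, x ∈ Set.Icc (0 : ℝ) 1 → y ∈ Set.Icc (-1 : ℝ) 1 →
      zxx x y + zyy x y + d * zy x y < 0)
    (h0 : ∀ y ∈ Set.Icc (-1 : ℝ) 1, 0 ≤ z 0 y) (h1 : ∀ y ∈ Set.Icc (-1 : ℝ) 1, 0 ≤ z 1 y)
    (hb : ∀ x ∈ Set.Icc (0 : ℝ) 1, 0 ≤ z x (-1)) (ht : ∀ x ∈ Set.Icc (0 : ℝ) 1, 0 ≤ z x 1)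
    {x y : ℝ} (hx : x ∈ Set.Icc (0 : ℝ) 1) (hy : y ∈ Set.Icc (-1 : ℝ) 1) : 0 ≤ z x y := by
  obtain ⟨⟨a, b⟩, ⟨ha, hb'⟩, hmin⟩ := (isCompact_Icc.prod isCompact_Icc).exists_isMinOn
    (⟨(x, y), hx, hy⟩ : (Set.Icc (0 : ℝ) 1 ×ˢ Set.Icc (-1 : ℝ) 1).Nonempty) hz.cont.continuousOn
  have hle : ∀ s ∈ Set.Icc (0 : ℝ) 1, ∀ t ∈ Set.Icc (-1 : ℝ) 1, z a b ≤ z s t :=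
    fun s hs t ht => hmin (⟨hs, ht⟩ : (s, t) ∈ Set.Icc (0 : ℝ) 1 ×ˢ Set.Icc (-1 : ℝ) 1)
  refine le_trans ?_ (hle x hx y hy)
  simp only at ha hb'
  rcases ha.1.eq_or_lt with rfl | ha0
  · exact h0 b hb'
  rcases ha.2.eq_or_lt with rfl | ha1
  · exact h1 b hb'
  rcases hb'.1.eq_or_lt with rfl | hb0
  · exact hb a ha
  rcases hb'.2.eq_or_lt with rfl | hb1
  · exact ht a ha
  have hminx : IsLocalMin (fun t => z t b) a := by
    filter_upwards [Icc_mem_nhds ha0 ha1] with s hs using hle s hs b hb'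
  have hminy : IsLocalMin (fun t => z a t) b := by
    filter_upwards [Icc_mem_nhds hb0 hb1] with t ht using hle a ha t ht
  have e1 := hminx.second_deriv_nonneg (fun t => hz.hx t b) (hz.hxx a b)
  have e2 := hminy.second_deriv_nonneg (fun t => hz.hy a t) (hz.hyy a b)
  have e3 := hminy.hasDerivAt_eq_zero (hz.hy a b)
  have := hL a b ha hb'
  rw [e3] at this
  linarith

/-- One-sided comparison on the half square for the odd part of `w`. -/
lemma HasSecondPartials.odd_part_le {w wx wy wxx wyy : ℝ → ℝ → ℝ}
    (hw : HasSecondPartials w wx wy wxx wyy) {d B : ℝ} (hB : 0 < B)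
    (hwB : ∀ x ∈ Set.Icc (-1 : ℝ) 1, ∀ y ∈ Set.Icc (-1 : ℝ) 1, |w x y| ≤ B)
    (hLB : ∀ x ∈ Set.Icc (-1 : ℝ) 1, ∀ y ∈ Set.Icc (-1 : ℝ) 1,
      |wxx x y + wyy x y + d * wy x y| ≤ B)
    {x : ℝ} (hx : x ∈ Set.Icc (0 : ℝ) 1) :
    (w x 0 - w (-x) 0) / 2 ≤ (3 + |d|) * B * x := by
  have hpoly : ∀ x y : ℝ, HasDerivAt (fun t => B * (y ^ 2 + (3 + |d|) * t - (2 + |d|) * t ^ 2))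
      (B * ((3 + |d|) - 2 * (2 + |d|) * x)) x := fun x y => by
    refine HasDerivAt.congr_deriv (((((hasDerivAt_id x).const_mul (3 + |d|)).const_add (y ^ 2)).sub
      ((hasDerivAt_pow 2 x).const_mul (2 + |d|))).const_mul B) ?_
    push_cast; ring
  have hpoly' : ∀ x y : ℝ, HasDerivAt (fun t => B * (t ^ 2 + (3 + |d|) * x - (2 + |d|) * x ^ 2))
      (B * (2 * y)) y := fun x y => by
    refine HasDerivAt.congr_deriv ((((hasDerivAt_pow 2 y).add_const ((3 + |d|) * x)).sub_const
      ((2 + |d|) * x ^ 2)).const_mul B) ?_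
    push_cast; ring
  have hz : HasSecondPartials
      (fun x y => B * (y ^ 2 + (3 + |d|) * x - (2 + |d|) * x ^ 2) - (w x y - w (-x) y) / 2)
      (fun x y => B * ((3 + |d|) - 2 * (2 + |d|) * x) - (wx x y + wx (-x) y) / 2)
      (fun x y => B * (2 * y) - (wy x y - wy (-x) y) / 2)
      (fun x y => B * (- (2 * (2 + |d|))) - (wxx x y - wxx (-x) y) / 2)
      (fun x y => B * 2 - (wyy x y - wyy (-x) y) / 2) := by
    refine ⟨?_, fun x y => ?_, fun x y => ?_, fun x y => ?_, fun x y => ?_⟩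
    · have h1 := hw.cont
      have h2 : Continuous fun p : ℝ × ℝ => w (-p.1) p.2 :=
        hw.cont.comp (continuous_fst.neg.prodMk continuous_snd)
      fun_prop
    · have h := (hw.hx (-x) y).comp x (hasDerivAt_neg x)
      refine HasDerivAt.congr_deriv ((hpoly x y).sub (((hw.hx x y).sub h).div_const 2)) ?_
      simp
    · exact (hpoly' x y).sub (((hw.hy x y).sub (hw.hy (-x) y)).div_const 2)
    · have h := (hw.hxx (-x) y).comp x (hasDerivAt_neg x)
      have h' := (((hasDerivAt_id x).const_mul (2 * (2 + |d|))).const_sub (3 + |d|)).const_mul B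
      refine HasDerivAt.congr_deriv (h'.sub (((hw.hxx x y).add h).div_const 2)) ?_
      simp; ring
    · have h' := ((hasDerivAt_id y).const_mul 2).const_mul B
      refine HasDerivAt.congr_deriv (h'.sub (((hw.hyy x y).sub (hw.hyy (-x) y)).div_const 2)) ?_
      simp
  have hneg : ∀ x ∈ Set.Icc (0 : ℝ) 1, x ∈ Set.Icc (-1 : ℝ) 1 ∧ -x ∈ Set.Icc (-1 : ℝ) 1 :=
    fun x hx => ⟨⟨by linarith [hx.1], hx.2⟩, ⟨by linarith [hx.2], by linarith [hx.1]⟩⟩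
  have hodd : ∀ x ∈ Set.Icc (0 : ℝ) 1, ∀ y ∈ Set.Icc (-1 : ℝ) 1, (w x y - w (-x) y) / 2 ≤ B :=
    fun x hx y hy => by
      have e1 := abs_le.1 (hwB x (hneg x hx).1 y hy)
      have e2 := abs_le.1 (hwB (-x) (hneg x hx).2 y hy)
      linarith [e1.2, e2.1]
  have hside : ∀ x ∈ Set.Icc (0 : ℝ) 1, 0 ≤ B * ((3 + |d|) * x - (2 + |d|) * x ^ 2) :=
    fun x hx => by
      refine mul_nonneg hB.le ?_
      nlinarith [hx.1, hx.2, abs_nonneg d, mul_nonneg hx.1 (sub_nonneg.2 hx.2),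
        mul_nonneg (abs_nonneg d) (mul_nonneg hx.1 (sub_nonneg.2 hx.2))]
  have key := hz.nonneg_of_supersolution (d := d) ?_ ?_ ?_ ?_ ?_ hx
    (y := 0) ⟨by norm_num, by norm_num⟩
  · nlinarith [mul_nonneg (mul_nonneg hB.le (sq_nonneg x)) (abs_nonneg d),
      mul_nonneg hB.le (sq_nonneg x)]
  · intro x y hx hy
    have e1 := abs_le.1 (hLB x (hneg x hx).1 y hy)
    have e2 := abs_le.1 (hLB (-x) (hneg x hx).2 y hy)
    have e3 : d * y ≤ |d| := by
      calc d * y ≤ |d * y| := le_abs_self _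
        _ = |d| * |y| := abs_mul _ _
        _ ≤ |d| * 1 := by gcongr; exact abs_le.2 hy
        _ = |d| := mul_one _
    nlinarith [mul_le_mul_of_nonneg_left e3 hB.le, e1.1, e2.2]
  · intro y _
    have : 0 ≤ B * y ^ 2 := by positivity
    simpa using this
  · intro y hy
    have := hodd 1 ⟨zero_le_one, le_rfl⟩ y hy
    nlinarith [mul_nonneg hB.le (sq_nonneg y)]
  · intro x hx
    have := hodd x hx (-1) ⟨le_rfl, by norm_num⟩
    linarith [hside x hx]
  · intro x hx
    have := hodd x hx 1 ⟨by norm_num, le_rfl⟩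
    linarith [hside x hx]

/-- Interior estimate for `∂ₓw` in terms of bounds of `w` and `Δw + d ∂ᵧw` on a square. -/
lemma HasSecondPartials.abs_wx_zero_le {w wx wy wxx wyy : ℝ → ℝ → ℝ}
    (hw : HasSecondPartials w wx wy wxx wyy) {d B : ℝ} (hB : 0 < B)
    (hwB : ∀ x ∈ Set.Icc (-1 : ℝ) 1, ∀ y ∈ Set.Icc (-1 : ℝ) 1, |w x y| ≤ B)
    (hLB : ∀ x ∈ Set.Icc (-1 : ℝ) 1, ∀ y ∈ Set.Icc (-1 : ℝ) 1,
      |wxx x y + wyy x y + d * wy x y| ≤ B) :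
    |wx 0 0| ≤ (3 + |d|) * B := by
  have hupper : ∀ {v vx vy vxx vyy : ℝ → ℝ → ℝ}, HasSecondPartials v vx vy vxx vyy →
      (∀ x ∈ Set.Icc (-1 : ℝ) 1, ∀ y ∈ Set.Icc (-1 : ℝ) 1, |v x y| ≤ B) →
      (∀ x ∈ Set.Icc (-1 : ℝ) 1, ∀ y ∈ Set.Icc (-1 : ℝ) 1,
        |vxx x y + vyy x y + d * vy x y| ≤ B) → vx 0 0 ≤ (3 + |d|) * B := by
    intro v vx vy vxx vyy hv hvB hvL
    have hd : HasDerivAt (fun t => (v t 0 - v (-t) 0) / 2) (vx 0 0) 0 := by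
      have h0 : HasDerivAt (fun t => v t 0) (vx 0 0) (-0) := by simpa using hv.hx 0 0
      refine HasDerivAt.congr_deriv (((hv.hx 0 0).sub (h0.comp 0 (hasDerivAt_neg 0))).div_const 2) ?_
      simp
    have hlim := hd.tendsto_slope_zero_right
    refine le_of_tendsto hlim ?_
    filter_upwards [Ioo_mem_nhdsGT (zero_lt_one' ℝ)] with t ht
    have := hv.odd_part_le hB hvB hvL (x := t) ⟨ht.1.le, ht.2.le⟩
    simp only [zero_add, neg_zero, sub_self, zero_div, sub_zero, smul_eq_mul]
    rw [inv_mul_le_iff₀ ht.1]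
    linarith
  refine abs_le.2 ⟨?_, hupper hw hwB hLB⟩
  have hneg : HasSecondPartials (fun x y => -w x y) (fun x y => -wx x y) (fun x y => -wy x y)
      (fun x y => -wxx x y) (fun x y => -wyy x y) :=
    ⟨hw.cont.neg, fun x y => (hw.hx x y).neg, fun x y => (hw.hy x y).neg,
      fun x y => (hw.hxx x y).neg, fun x y => (hw.hyy x y).neg⟩
  have := hupper hneg (fun x hx y hy => by rw [abs_neg]; exact hwB x hx y hy)
    (fun x hx y hy => by
      rw [← abs_neg]
      convert hLB x hx y hy using 2
      ring)
  linarith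

lemma HasSecondPartials.translate {w wx wy wxx wyy : ℝ → ℝ → ℝ}
    (hw : HasSecondPartials w wx wy wxx wyy) (a b : ℝ) :
    HasSecondPartials (fun x y => w (a + x) (b + y)) (fun x y => wx (a + x) (b + y))
      (fun x y => wy (a + x) (b + y)) (fun x y => wxx (a + x) (b + y))
      (fun x y => wyy (a + x) (b + y)) where
  cont := hw.cont.comp
    ((continuous_const.add continuous_fst).prodMk (continuous_const.add continuous_snd))
  hx x y := (hw.hx (a + x) (b + y)).comp_const_add a x
  hy x y := (hw.hy (a + x) (b + y)).comp_const_add b y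
  hxx x y := (hw.hxx (a + x) (b + y)).comp_const_add a x
  hyy x y := (hw.hyy (a + x) (b + y)).comp_const_add b y

lemma HasSecondPartials.abs_wy_zero_le {w wx wy wxx wyy : ℝ → ℝ → ℝ}
    (hw : HasSecondPartials w wx wy wxx wyy) {d B : ℝ} (hB : 0 < B)
    (hwB : ∀ x ∈ Set.Icc (-1 : ℝ) 1, ∀ y ∈ Set.Icc (-1 : ℝ) 1, |w x y| ≤ B)
    (hLB : ∀ x ∈ Set.Icc (-1 : ℝ) 1, ∀ y ∈ Set.Icc (-1 : ℝ) 1,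
      |wxx x y + wyy x y + d * wy x y| ≤ B) :
    |wy 0 0| ≤ (3 * (exp |d| * (1 + d ^ 2)) + |d|) * B := by
  have hexp : ∀ s : ℝ, HasDerivAt (fun s => exp (d / 2 * s)) (exp (d / 2 * s) * (d / 2)) s :=
    fun s => by
      simpa using ((hasDerivAt_id s).const_mul (d / 2)).exp
  -- conjugating by an exponential removes the drift and makes the equation reflection invariant
  have hv : HasSecondPartials (fun s t => exp (d / 2 * s) * w t s)
      (fun s t => exp (d / 2 * s) * (wy t s + d / 2 * w t s))
      (fun s t => exp (d / 2 * s) * wx t s)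
      (fun s t => exp (d / 2 * s) * (wyy t s + d * wy t s + d ^ 2 / 4 * w t s))
      (fun s t => exp (d / 2 * s) * wxx t s) := by
    refine ⟨?_, fun s t => ?_, fun s t => (hw.hx t s).const_mul _, fun s t => ?_,
      fun s t => (hw.hxx t s).const_mul _⟩
    · have : Continuous fun p : ℝ × ℝ => w p.2 p.1 := hw.cont.comp continuous_swap
      exact (by fun_prop : Continuous fun p : ℝ × ℝ => exp (d / 2 * p.1)).mul this
    · refine HasDerivAt.congr_deriv ((hexp s).mul (hw.hy t s)) ?_
      ring
    · refine HasDerivAt.congr_deriv ((hexp s).mul ((hw.hyy t s).add ((hw.hy t s).const_mul (d / 2)))) ?_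
      ring
  have hE : ∀ s ∈ Set.Icc (-1 : ℝ) 1, exp (d / 2 * s) ≤ exp |d| := fun s hs => by
    refine exp_le_exp.2 ((le_abs_self _).trans ?_)
    rw [abs_mul, abs_div, abs_two]
    nlinarith [abs_nonneg d, abs_nonneg s, abs_le.2 hs]
  have key := hv.abs_wx_zero_le (d := 0) (B := exp |d| * (1 + d ^ 2) * B) (by positivity)
    (fun s hs t ht => ?_) (fun s hs t ht => ?_)
  · simp only [mul_zero, exp_zero, one_mul, abs_zero, add_zero] at key
    have h0 := hwB 0 ⟨by norm_num, by norm_num⟩ 0 ⟨by norm_num, by norm_num⟩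
    calc |wy 0 0| = |(wy 0 0 + d / 2 * w 0 0) - d / 2 * w 0 0| := by ring_nf
      _ ≤ |wy 0 0 + d / 2 * w 0 0| + |d / 2 * w 0 0| := abs_sub _ _
      _ ≤ 3 * (exp |d| * (1 + d ^ 2) * B) + |d| * B := by
        refine add_le_add key ?_
        rw [abs_mul, abs_div, abs_two]
        nlinarith [mul_nonneg (abs_nonneg d) (abs_nonneg (w 0 0)),
          mul_le_mul_of_nonneg_left h0 (abs_nonneg d)]
      _ = _ := by ring
  · rw [abs_mul, abs_of_pos (exp_pos _)]
    have := hwB t ht s hs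
    calc exp (d / 2 * s) * |w t s| ≤ exp |d| * B :=
        mul_le_mul (hE s hs) this (abs_nonneg _) (exp_pos _).le
      _ ≤ exp |d| * (1 + d ^ 2) * B := by
        have : 0 ≤ exp |d| * d ^ 2 * B := by positivity
        linarith
  · have e1 := hwB t ht s hs
    have e2 := hLB t ht s hs
    calc _ = |exp (d / 2 * s) * ((wxx t s + wyy t s + d * wy t s) + d ^ 2 / 4 * w t s)| := by
          congr 1; ring
      _ = exp (d / 2 * s) * |(wxx t s + wyy t s + d * wy t s) + d ^ 2 / 4 * w t s| := by
          rw [abs_mul, abs_of_pos (exp_pos _)]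
      _ ≤ exp |d| * (B + d ^ 2 / 4 * B) := by
          refine mul_le_mul (hE s hs) ?_ (abs_nonneg _) (exp_pos _).le
          · refine (abs_add_le _ _).trans (add_le_add e2 ?_)
            rw [abs_mul, abs_of_nonneg (by positivity : 0 ≤ d ^ 2 / 4)]
            gcongr
      _ ≤ exp |d| * (1 + d ^ 2) * B := by
          have : 0 ≤ exp |d| * d ^ 2 * B := by positivity
          linarith

/-- Interior gradient estimate for the operator `Δ + d ∂ᵧ`. -/
lemma HasSecondPartials.exists_gradient_bound (d : ℝ) :
    ∃ k : ℝ, 0 < k ∧ ∀ {w wx wy wxx wyy : ℝ → ℝ → ℝ}, HasSecondPartials w wx wy wxx wyy →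
      ∀ {B a b : ℝ}, 0 < B →
      (∀ x ∈ Set.Icc (a - 1) (a + 1), ∀ y ∈ Set.Icc (b - 1) (b + 1),
        |w x y| ≤ B ∧ |wxx x y + wyy x y + d * wy x y| ≤ B) →
      |wx a b| ≤ k * B ∧ |wy a b| ≤ k * B := by
  refine ⟨(3 + |d|) + (3 * (exp |d| * (1 + d ^ 2)) + |d|), by positivity, ?_⟩
  intro w wx wy wxx wyy hw B a b hB h
  have hmem : ∀ {e s : ℝ}, s ∈ Set.Icc (-1 : ℝ) 1 → e + s ∈ Set.Icc (e - 1) (e + 1) :=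
    fun hs => ⟨by linarith [hs.1], by linarith [hs.2]⟩
  have h1 := (hw.translate a b).abs_wx_zero_le hB
    (fun x hx y hy => (h _ (hmem hx) _ (hmem hy)).1)
    (fun x hx y hy => (h _ (hmem hx) _ (hmem hy)).2)
  have h2 := (hw.translate a b).abs_wy_zero_le hB
    (fun x hx y hy => (h _ (hmem hx) _ (hmem hy)).1)
    (fun x hx y hy => (h _ (hmem hx) _ (hmem hy)).2)
  simp only [add_zero] at h1 h2
  have p1 : 0 ≤ (3 + |d|) * B := by positivity
  have p2 : 0 ≤ (3 * (exp |d| * (1 + d ^ 2)) + |d|) * B := by positivity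
  constructor <;> linarith

lemma hasDerivAt_slice_fst {u : ℝ → ℝ → ℝ} (hu : Differentiable ℝ fun p : ℝ × ℝ => u p.1 p.2)
    (x y : ℝ) :
    HasDerivAt (fun t => u t y) (fderiv ℝ (fun p : ℝ × ℝ => u p.1 p.2) (x, y) (1, 0)) x :=
  (hu (x, y)).hasFDerivAt.comp_hasDerivAt (f := fun t => (t, y)) x
    ((hasDerivAt_id x).prodMk (hasDerivAt_const x y))

lemma hasDerivAt_slice_snd {u : ℝ → ℝ → ℝ} (hu : Differentiable ℝ fun p : ℝ × ℝ => u p.1 p.2)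
    (x y : ℝ) :
    HasDerivAt (fun t => u x t) (fderiv ℝ (fun p : ℝ × ℝ => u p.1 p.2) (x, y) (0, 1)) y :=
  (hu (x, y)).hasFDerivAt.comp_hasDerivAt (f := fun t => (x, t)) y
    ((hasDerivAt_const y x).prodMk (hasDerivAt_id y))

lemma pdx_eq_fderiv {u : ℝ → ℝ → ℝ} (hu : Differentiable ℝ fun p : ℝ × ℝ => u p.1 p.2)
    (x y : ℝ) : pdx u x y = fderiv ℝ (fun p : ℝ × ℝ => u p.1 p.2) (x, y) (1, 0) :=
  (hasDerivAt_slice_fst hu x y).deriv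

lemma pdy_eq_fderiv {u : ℝ → ℝ → ℝ} (hu : Differentiable ℝ fun p : ℝ × ℝ => u p.1 p.2)
    (x y : ℝ) : pdy u x y = fderiv ℝ (fun p : ℝ × ℝ => u p.1 p.2) (x, y) (0, 1) :=
  (hasDerivAt_slice_snd hu x y).deriv

lemma hasDerivAt_pdx {u : ℝ → ℝ → ℝ} (hu : Differentiable ℝ fun p : ℝ × ℝ => u p.1 p.2)
    (x y : ℝ) : HasDerivAt (fun t => u t y) (pdx u x y) x :=
  (hasDerivAt_slice_fst hu x y).differentiableAt.hasDerivAt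

lemma hasDerivAt_pdy {u : ℝ → ℝ → ℝ} (hu : Differentiable ℝ fun p : ℝ × ℝ => u p.1 p.2)
    (x y : ℝ) : HasDerivAt (fun t => u x t) (pdy u x y) y :=
  (hasDerivAt_slice_snd hu x y).differentiableAt.hasDerivAt

lemma contDiff_pdx {u : ℝ → ℝ → ℝ} {n : ℕ} (hu : ContDiff ℝ (n + 1) fun p : ℝ × ℝ => u p.1 p.2) :
    ContDiff ℝ n fun p : ℝ × ℝ => pdx u p.1 p.2 := by
  have hd : Differentiable ℝ fun p : ℝ × ℝ => u p.1 p.2 := hu.differentiable (by simp)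
  simp only [pdx_eq_fderiv hd]
  exact (hu.fderiv_right le_rfl).clm_apply contDiff_const

lemma contDiff_pdy {u : ℝ → ℝ → ℝ} {n : ℕ} (hu : ContDiff ℝ (n + 1) fun p : ℝ × ℝ => u p.1 p.2) :
    ContDiff ℝ n fun p : ℝ × ℝ => pdy u p.1 p.2 := by
  have hd : Differentiable ℝ fun p : ℝ × ℝ => u p.1 p.2 := hu.differentiable (by simp)
  simp only [pdy_eq_fderiv hd]
  exact (hu.fderiv_right le_rfl).clm_apply contDiff_const

lemma pdx_pdy_comm {u : ℝ → ℝ → ℝ} (hu : ContDiff ℝ 2 fun p : ℝ × ℝ => u p.1 p.2) (x y : ℝ) :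
    pdx (pdy u) x y = pdy (pdx u) x y := by
  have hu' : ContDiff ℝ ((1 : ℕ) + 1) fun p : ℝ × ℝ => u p.1 p.2 := by
    simpa [one_add_one_eq_two] using hu
  have hd : Differentiable ℝ fun p : ℝ × ℝ => u p.1 p.2 := hu.differentiable (by simp)
  have hdd : Differentiable ℝ (fderiv ℝ fun p : ℝ × ℝ => u p.1 p.2) :=
    (hu.fderiv_right (m := 1) (by norm_num)).differentiable (by simp)
  rw [pdx_eq_fderiv ((contDiff_pdy hu').differentiable (by simp)),
    pdy_eq_fderiv ((contDiff_pdx hu').differentiable (by simp))]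
  simp only [pdx_eq_fderiv hd, pdy_eq_fderiv hd]
  rw [fderiv_clm_apply (hdd _) (differentiableAt_const _),
    fderiv_clm_apply (hdd _) (differentiableAt_const _)]
  simpa using
    (hu.contDiffAt.isSymmSndFDerivAt (by simp) : IsSymmSndFDerivAt ℝ _ (x, y)) (1, 0) (0, 1)

lemma hasSecondPartials_of_contDiff {u : ℝ → ℝ → ℝ}
    (hu : ContDiff ℝ 2 fun p : ℝ × ℝ => u p.1 p.2) :
    HasSecondPartials u (pdx u) (pdy u) (pdxx u) (pdyy u) := by
  have hu' : ContDiff ℝ ((1 : ℕ) + 1) fun p : ℝ × ℝ => u p.1 p.2 := by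
    simpa [one_add_one_eq_two] using hu
  have hd : Differentiable ℝ fun p : ℝ × ℝ => u p.1 p.2 := hu.differentiable (by simp)
  exact ⟨hu.continuous, hasDerivAt_pdx hd, hasDerivAt_pdy hd,
    hasDerivAt_pdx ((contDiff_pdx hu').differentiable (by simp)),
    hasDerivAt_pdy ((contDiff_pdy hu').differentiable (by simp))⟩

section Solution

variable {F : ℝ → ℝ} {c : ℝ} {u : ℝ → ℝ → ℝ}

lemma IsSolution.contDiff_two (hu : IsSolution F c u) :
    ContDiff ℝ 2 fun p : ℝ × ℝ => u p.1 p.2 := hu.1.of_le (by norm_num)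

lemma IsSolution.continuous_pdx (hu : IsSolution F c u) :
    Continuous fun p : ℝ × ℝ => pdx u p.1 p.2 :=
  (contDiff_pdx (n := 1) (hu.1.of_le (by norm_num))).continuous

lemma IsSolution.continuous_pdy (hu : IsSolution F c u) :
    Continuous fun p : ℝ × ℝ => pdy u p.1 p.2 :=
  (contDiff_pdy (n := 1) (hu.1.of_le (by norm_num))).continuous

lemma IsSolution.monotone (hu : IsSolution F c u) (x : ℝ) : Monotone (u x) :=
  monotone_of_deriv_nonneg
    (fun y => (hasDerivAt_pdy (hu.contDiff_two.differentiable (by simp)) x y).differentiableAt)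
    fun y => (hu.2.2.2 x y).le

/-- A bounded solution has bounded gradient. -/
lemma IsSolution.exists_gradient_bound (hF : Continuous (deriv F)) (hu : IsSolution F c u) :
    ∃ k : ℝ, 0 < k ∧ ∀ x y, |pdx u x y| ≤ k ∧ |pdy u x y| ≤ k := by
  obtain ⟨k, hk, hgrad⟩ := HasSecondPartials.exists_gradient_bound c
  obtain ⟨M, hM⟩ := isCompact_Icc.exists_bound_of_continuousOn
    (s := Set.Icc (-1 : ℝ) 1) hF.continuousOn
  have hB : 0 < max M 1 := lt_max_of_lt_right one_pos
  refine ⟨k * max M 1, by positivity, fun x y => ?_⟩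
  refine hgrad (hasSecondPartials_of_contDiff hu.contDiff_two) hB fun x _ y _ => ⟨?_, ?_⟩
  · exact (hu.2.2.1 x y).trans (le_max_right _ _)
  · rw [hu.2.1 x y]
    exact (hM _ (abs_le.1 (hu.2.2.1 x y))).trans (le_max_left _ _)

/-- If `u(·, y)` converges locally uniformly to a stationary profile `h`, then so does its
gradient. -/
lemma IsSolution.tendsto_gradient (hF : Continuous (deriv F)) (hu : IsSolution F c u)
    {h : ℝ → ℝ} (hh : ContDiff ℝ 2 h) (hode : ∀ t, deriv (deriv h) t = deriv F (h t))
    (hh1 : ∀ t, |h t| ≤ 1) {l : Filter ℝ} (a : ℝ)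
    (hshift : ∀ p : ℝ → Prop, (∀ᶠ y in l, p y) →
      ∀ᶠ y in l, ∀ y' ∈ Set.Icc (y - 1) (y + 1), p y')
    (hunif : TendstoUniformlyOn (fun y x => u x y) h l (Set.Icc (a - 1) (a + 1))) :
    Tendsto (fun y => pdx u a y) l (nhds (deriv h a)) ∧
      Tendsto (fun y => pdy u a y) l (nhds 0) := by
  obtain ⟨k, hk, hgrad⟩ := HasSecondPartials.exists_gradient_bound c
  have hU := hasSecondPartials_of_contDiff hu.contDiff_two
  have hd1 : ∀ x, HasDerivAt h (deriv h x) x :=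
    fun x => (hh.differentiable (by simp) x).hasDerivAt
  have hd2 : ∀ x, HasDerivAt (deriv h) (deriv F (h x)) x := fun x => by
    rw [← hode]
    have : ContDiff ℝ 1 (deriv h) := (contDiff_succ_iff_deriv.1 hh).2.2
    exact (this.differentiable (by simp) x).hasDerivAt
  have hw : HasSecondPartials (fun x y => u x y - h x) (fun x y => pdx u x y - deriv h x)
      (pdy u) (fun x y => pdxx u x y - deriv F (h x)) (pdyy u) :=
    ⟨hU.cont.sub (hh.continuous.comp continuous_fst), fun x y => (hU.hx x y).sub (hd1 x),
      fun x y => (hU.hy x y).sub_const _, fun x y => (hU.hxx x y).sub (hd2 x), hU.hyy⟩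
  have hsmall : ∀ B > 0, ∀ᶠ y in l, |pdx u a y - deriv h a| ≤ k * B ∧ |pdy u a y| ≤ k * B := by
    intro B hB
    have huc := isCompact_Icc.uniformContinuousOn_of_continuous
      (s := Set.Icc (-1 : ℝ) 1) hF.continuousOn
    obtain ⟨δ, hδ, hδF⟩ := Metric.uniformContinuousOn_iff.1 huc B hB
    have hev := Metric.tendstoUniformlyOn_iff.1 hunif (min δ B) (lt_min hδ hB)
    filter_upwards [hshift _ hev] with y hy
    refine hgrad hw hB fun x hx y' hy' => ?_
    have hdist : dist (u x y') (h x) < min δ B := by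
      rw [dist_comm]; exact hy y' hy' x hx
    refine ⟨(hdist.trans_le (min_le_right _ _)).le, ?_⟩
    have := hδF (u x y') (abs_le.1 (hu.2.2.1 x y')) (h x) (abs_le.1 (hh1 x))
      (hdist.trans_le (min_le_left _ _))
    rw [Real.dist_eq, ← hu.2.1 x y'] at this
    rw [show pdxx u x y' - deriv F (h x) + pdyy u x y' + c * pdy u x y' =
      pdxx u x y' + pdyy u x y' + c * pdy u x y' - deriv F (h x) by ring]
    exact this.le
  refine ⟨Metric.tendsto_nhds.2 fun ε hε => ?_, Metric.tendsto_nhds.2 fun ε hε => ?_⟩ <;>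
    filter_upwards [hsmall (ε / (2 * k)) (by positivity)] with y hy
  · rw [Real.dist_eq]
    refine hy.1.trans_lt ?_
    field_simp
    linarith
  · rw [Real.dist_eq, sub_zero]
    refine hy.2.trans_lt ?_
    field_simp
    linarith

lemma IsSolution.tendsto_gradient_atTop (hF : Continuous (deriv F)) (hu : IsSolution F c u)
    {h : ℝ → ℝ} (hh : ContDiff ℝ 2 h) (hode : ∀ t, deriv (deriv h) t = deriv F (h t))
    (hlim : ∀ x, Tendsto (fun y => u x y) atTop (nhds (h x))) (a : ℝ) :
    Tendsto (fun y => pdx u a y) atTop (nhds (deriv h a)) ∧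
      Tendsto (fun y => pdy u a y) atTop (nhds 0) := by
  refine hu.tendsto_gradient hF hh hode
    (fun x => le_of_tendsto (hlim x).abs (Eventually.of_forall (hu.2.2.1 x))) a ?_ ?_
  · intro p hp
    obtain ⟨N, hN⟩ := eventually_atTop.1 hp
    filter_upwards [eventually_ge_atTop (N + 1)] with y hy y' hy'
    exact hN y' (by linarith [hy'.1])
  · exact Monotone.tendstoUniformlyOn_of_forall_tendsto isCompact_Icc
      (fun y => (hu.1.continuous.comp (continuous_id.prodMk continuous_const)).continuousOn)
      (fun x _ => hu.monotone x) hh.continuous.continuousOn fun x _ => hlim x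

lemma IsSolution.tendsto_gradient_atBot (hF : Continuous (deriv F)) (hu : IsSolution F c u)
    {h : ℝ → ℝ} (hh : ContDiff ℝ 2 h) (hode : ∀ t, deriv (deriv h) t = deriv F (h t))
    (hlim : ∀ x, Tendsto (fun y => u x y) atBot (nhds (h x))) (a : ℝ) :
    Tendsto (fun y => pdx u a y) atBot (nhds (deriv h a)) ∧
      Tendsto (fun y => pdy u a y) atBot (nhds 0) := by
  refine hu.tendsto_gradient hF hh hode
    (fun x => le_of_tendsto (hlim x).abs (Eventually.of_forall (hu.2.2.1 x))) a ?_ ?_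
  · intro p hp
    obtain ⟨N, hN⟩ := eventually_atBot.1 hp
    filter_upwards [eventually_le_atBot (N - 1)] with y hy y' hy'
    exact hN y' (by linarith [hy'.2])
  · have hanti : TendstoUniformlyOn (fun y x => u x (-y)) h atTop (Set.Icc (a - 1) (a + 1)) :=
      Antitone.tendstoUniformlyOn_of_forall_tendsto isCompact_Icc
        (fun y => (hu.1.continuous.comp (continuous_id.prodMk continuous_const)).continuousOn)
        (fun x _ y y' hyy' => hu.monotone x (neg_le_neg hyy')) hh.continuous.continuousOn
        fun x _ => (hlim x).comp tendsto_neg_atTop_atBot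
    intro V hV
    simpa using tendsto_neg_atBot_atTop.eventually (hanti V hV)

/-- Integral form of the Hamiltonian identity on a rectangle, with the dissipation term dropped. -/
lemma IsSolution.hamiltonian_rectangle (hF : ContDiff ℝ 3 F) (hc : 0 < c) (hu : IsSolution F c u)
    {a b p q : ℝ} (hab : a ≤ b) (hpq : p ≤ q) :
    (∫ x in a..b, (pdy u x q ^ 2 - pdx u x q ^ 2) / 2 - F (u x q)) -
      (∫ x in a..b, (pdy u x p ^ 2 - pdx u x p ^ 2) / 2 - F (u x p)) +
      (∫ y in p..q, pdx u b y * pdy u b y) - (∫ y in p..q, pdx u a y * pdy u a y) ≤ 0 := by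
  have h2 := hu.contDiff_two
  have hU := hasSecondPartials_of_contDiff h2
  have hX : ContDiff ℝ 1 fun p : ℝ × ℝ => pdx u p.1 p.2 :=
    contDiff_pdx (n := 1) (h2.of_le (by norm_num))
  have hY : ContDiff ℝ 1 fun p : ℝ × ℝ => pdy u p.1 p.2 :=
    contDiff_pdy (n := 1) (h2.of_le (by norm_num))
  have hP : ContDiff ℝ 1 fun p : ℝ × ℝ => pdx u p.1 p.2 * pdy u p.1 p.2 := hX.mul hY
  have hQ : ContDiff ℝ 1 fun p : ℝ × ℝ =>
      (pdy u p.1 p.2 ^ 2 - pdx u p.1 p.2 ^ 2) / 2 - F (u p.1 p.2) :=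
    (((hY.pow 2).sub (hX.pow 2)).div_const 2).sub
      ((hF.of_le (by norm_num)).comp (h2.of_le (by norm_num)))
  have hdiv : ∀ x y : ℝ,
      fderiv ℝ (fun p : ℝ × ℝ => pdx u p.1 p.2 * pdy u p.1 p.2) (x, y) (1, 0) +
      fderiv ℝ (fun p : ℝ × ℝ => (pdy u p.1 p.2 ^ 2 - pdx u p.1 p.2 ^ 2) / 2 - F (u p.1 p.2))
        (x, y) (0, 1) = -(c * pdy u x y ^ 2) := by
    intro x y
    have hFd : HasDerivAt F (deriv F (u x y)) (u x y) :=
      (hF.differentiable (by simp) _).hasDerivAt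
    have e1 := (hasDerivAt_slice_fst (u := fun x y => pdx u x y * pdy u x y)
      (hP.differentiable (by simp)) x y).unique
      ((hU.hxx x y).mul (hasDerivAt_pdx (hY.differentiable (by simp)) x y))
    have e2 := (hasDerivAt_slice_snd
      (u := fun x y => (pdy u x y ^ 2 - pdx u x y ^ 2) / 2 - F (u x y))
      (hQ.differentiable (by simp)) x y).unique
      (((((hU.hyy x y).pow 2).sub
        ((hasDerivAt_pdy (hX.differentiable (by simp)) x y).pow 2)).div_const 2).sub
        (hFd.comp y (hU.hy x y)))
    rw [e1, e2, pdx_pdy_comm h2, ← hu.2.1 x y]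
    push_cast
    ring
  have hint := integral2_divergence_prod_of_hasFDerivAt _ _ _ _ a p b q
    hP.continuous.continuousOn hQ.continuous.continuousOn
    (fun x _ => (hP.differentiable (by simp) x).hasFDerivAt)
    (fun x _ => (hQ.differentiable (by simp) x).hasFDerivAt)
    (by
      refine ContinuousOn.integrableOn_compact (isCompact_uIcc.prod isCompact_uIcc) ?_
      exact (((hP.continuous_fderiv (by simp)).clm_apply continuous_const).add
        ((hQ.continuous_fderiv (by simp)).clm_apply continuous_const)).continuousOn)
  simp only [hdiv] at hint
  rw [← hint]
  simp only [intervalIntegral.integral_neg, Left.neg_nonpos_iff]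
  exact intervalIntegral.integral_nonneg hab fun x _ =>
    intervalIntegral.integral_nonneg hpq fun y _ => by positivity

lemma IsSolution.abs_integral_flux_le (hu : IsSolution F c u) {k : ℝ}
    (hbound : ∀ x y, |pdx u x y| ≤ k) (x : ℝ) {p q : ℝ} (hpq : p ≤ q) :
    |∫ y in p..q, pdx u x y * pdy u x y| ≤ k * (u x q - u x p) := by
  have hcont : Continuous (pdy u x) :=
    hu.continuous_pdy.comp (continuous_const.prodMk continuous_id)
  have hftc : ∫ y in p..q, pdy u x y = u x q - u x p :=
    intervalIntegral.integral_eq_sub_of_hasDerivAt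
      (fun y _ => hasDerivAt_pdy (hu.contDiff_two.differentiable (by simp)) x y)
      (hcont.intervalIntegrable _ _)
  rw [← hftc, ← intervalIntegral.integral_const_mul, ← Real.norm_eq_abs]
  refine intervalIntegral.norm_integral_le_of_norm_le hpq
    (Eventually.of_forall fun y _ => ?_) ((hcont.const_mul k).intervalIntegrable _ _)
  rw [norm_mul, Real.norm_eq_abs, Real.norm_eq_abs, abs_of_pos (hu.2.2.2 x y)]
  exact mul_le_mul_of_nonneg_right (hbound x y) (hu.2.2.2 x y).le

/-- For a wave rising from a stationary profile `g` to `1`, the energy deficit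
`∫ F(g) + g'² / 2 - F(1)` over any interval is controlled by `1 - g` at its endpoints. -/
lemma IsSolution.energy_deficit_le (hF : ContDiff ℝ 3 F) (hF1 : deriv F 1 = 0) (hc : 0 < c)
    (hu : IsSolution F c u) {g : ℝ → ℝ} (hg : ContDiff ℝ 2 g)
    (hode : ∀ t, deriv (deriv g) t = deriv F (g t))
    (htop : ∀ x, Tendsto (fun y => u x y) atTop (nhds 1))
    (hbot : ∀ x, Tendsto (fun y => u x y) atBot (nhds (g x))) :
    ∃ k : ℝ, 0 < k ∧ ∀ a b : ℝ, a ≤ b →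
      ∫ x in a..b, (F (g x) + deriv g x ^ 2 / 2 - F 1) ≤ k * ((1 - g a) + (1 - g b)) := by
  have hF' : Continuous (deriv F) := hF.continuous_deriv (by norm_num)
  obtain ⟨k, hk, hbound⟩ := hu.exists_gradient_bound hF'
  refine ⟨k, hk, fun a b hab => ?_⟩
  obtain ⟨M, hM⟩ := isCompact_Icc.exists_bound_of_continuousOn
    (s := Set.Icc (-1 : ℝ) 1) hF.continuous.continuousOn
  let Q : ℝ → ℝ → ℝ := fun x y => (pdy u x y ^ 2 - pdx u x y ^ 2) / 2 - F (u x y)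
  have hQc : ∀ y, Continuous fun x => Q x y := fun y => by
    have h1 : Continuous fun x => pdx u x y :=
      hu.continuous_pdx.comp (continuous_id.prodMk continuous_const)
    have h2 : Continuous fun x => pdy u x y :=
      hu.continuous_pdy.comp (continuous_id.prodMk continuous_const)
    have h3 : Continuous fun x => F (u x y) :=
      hF.continuous.comp (hu.1.continuous.comp (continuous_id.prodMk continuous_const))
    exact (((h2.pow 2).sub (h1.pow 2)).div_const 2).sub h3
  have hQb : ∀ x y, ‖Q x y‖ ≤ k ^ 2 + M := fun x y => by
    have e1 := sq_le_sq' (abs_le.1 (hbound x y).1).1 (abs_le.1 (hbound x y).1).2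
    have e2 := sq_le_sq' (abs_le.1 (hbound x y).2).1 (abs_le.1 (hbound x y).2).2
    have e3 := abs_le.1 (hM _ (abs_le.1 (hu.2.2.1 x y)))
    rw [Real.norm_eq_abs, abs_le]
    constructor <;> simp only [Q] <;> nlinarith [sq_nonneg (pdx u x y), sq_nonneg (pdy u x y)]
  have hlimint : ∀ {l : Filter ℝ} [l.IsCountablyGenerated] {f : ℝ → ℝ},
      (∀ x, Tendsto (fun y => Q x y) l (nhds (f x))) →
      Tendsto (fun y => ∫ x in a..b, Q x y) l (nhds (∫ x in a..b, f x)) := fun hlim =>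
    intervalIntegral.tendsto_integral_filter_of_dominated_convergence (fun _ => k ^ 2 + M)
      (Eventually.of_forall fun y => (hQc y).aestronglyMeasurable)
      (Eventually.of_forall fun y => Eventually.of_forall fun x _ => hQb x y)
      intervalIntegrable_const (Eventually.of_forall fun x _ => hlim x)
  have hQtop : ∀ x, Tendsto (fun y => Q x y) atTop (nhds (-F 1)) := fun x => by
    obtain ⟨h1, h2⟩ := hu.tendsto_gradient_atTop hF' (h := fun _ => 1) contDiff_const
      (fun t => by simp [hF1]) htop x
    have h3 := (hF.continuous.tendsto 1).comp (htop x)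
    simpa using (((h2.pow 2).sub (h1.pow 2)).div_const 2).sub h3
  have hQbot : ∀ x, Tendsto (fun y => Q x y) atBot (nhds (-(F (g x) + deriv g x ^ 2 / 2))) :=
    fun x => by
      obtain ⟨h1, h2⟩ := hu.tendsto_gradient_atBot hF' hg hode hbot x
      have h3 := (hF.continuous.tendsto (g x)).comp (hbot x)
      rw [show -(F (g x) + deriv g x ^ 2 / 2) = (0 ^ 2 - deriv g x ^ 2) / 2 - F (g x) by ring]
      exact (((h2.pow 2).sub (h1.pow 2)).div_const 2).sub h3
  have hineq : ∀ n : ℝ, 0 ≤ n →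
      (∫ x in a..b, Q x n) - (∫ x in a..b, Q x (-n)) ≤ k * ((1 - g a) + (1 - g b)) := by
    intro n hn
    have hH := hu.hamiltonian_rectangle hF hc hab (neg_le_self hn)
    have hflux : ∀ x, |∫ y in (-n)..n, pdx u x y * pdy u x y| ≤ k * (1 - g x) := fun x =>
      (hu.abs_integral_flux_le (fun x y => (hbound x y).1) x (neg_le_self hn)).trans
        (mul_le_mul_of_nonneg_left (sub_le_sub ((hu.monotone x).ge_of_tendsto (htop x) n)
          ((hu.monotone x).le_of_tendsto (hbot x) (-n))) hk.le)
    have ha := abs_le.1 (hflux a)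
    have hb := abs_le.1 (hflux b)
    simp only [Q]
    linarith [ha.2, hb.1]
  have hlim := (hlimint hQtop).sub ((hlimint hQbot).comp tendsto_neg_atTop_atBot)
  have hfin := le_of_tendsto hlim ((eventually_ge_atTop 0).mono hineq)
  have hcg : Continuous fun x => F (g x) + deriv g x ^ 2 / 2 :=
    (hF.continuous.comp hg.continuous).add
      (((hg.continuous_deriv (by norm_num)).pow 2).div_const 2)
  rw [intervalIntegral.integral_sub (hcg.intervalIntegrable _ _) intervalIntegrable_const]
  simp only [intervalIntegral.integral_neg] at hfin
  linarith

end Solution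

lemma energy_const {F g : ℝ → ℝ} (hF : Differentiable ℝ F) (hg : ContDiff ℝ 2 g)
    (hode : ∀ t, deriv (deriv g) t = deriv F (g t)) (s t : ℝ) :
    F (g s) - deriv g s ^ 2 / 2 = F (g t) - deriv g t ^ 2 / 2 := by
  have hd : ∀ x, HasDerivAt (fun x => F (g x) - deriv g x ^ 2 / 2) 0 x := fun x => by
    have h1 : HasDerivAt g (deriv g x) x := (hg.differentiable (by simp) x).hasDerivAt
    have h2 : HasDerivAt (deriv g) (deriv F (g x)) x := by
      rw [← hode]
      have : ContDiff ℝ 1 (deriv g) := (contDiff_succ_iff_deriv.1 hg).2.2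
      exact (this.differentiable (by simp) x).hasDerivAt
    refine HasDerivAt.congr_deriv
      (((hF (g x)).hasDerivAt.comp x h1).sub ((h2.pow 2).div_const 2)) ?_
    push_cast
    ring
  exact is_const_of_deriv_eq_zero (fun x => (hd x).differentiableAt) (fun x => (hd x).deriv) s t

/-- A stationary profile converging to `1` has energy `F 1`. -/
lemma energy_eq_of_tendsto {F g : ℝ → ℝ} (hF : Differentiable ℝ F) (hg : ContDiff ℝ 2 g)
    (hode : ∀ t, deriv (deriv g) t = deriv F (g t)) (hlim : Tendsto g atTop (nhds 1)) (t : ℝ) :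
    F (g t) - deriv g t ^ 2 / 2 = F 1 := by
  set E := F (g t) - deriv g t ^ 2 / 2 with hE
  have hmv : ∀ n : ℝ, ∃ ξ ∈ Set.Ioo n (n + 1), deriv g ξ = g (n + 1) - g n := fun n => by
    obtain ⟨ξ, hξ, h⟩ := exists_deriv_eq_slope g (lt_add_one n) hg.continuous.continuousOn
      (hg.differentiable (by simp)).differentiableOn
    exact ⟨ξ, hξ, by simpa using h⟩
  choose ξ hξ hξd using hmv
  have hξtop : Tendsto ξ atTop atTop := tendsto_atTop_mono (fun n => (hξ n).1.le) tendsto_id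
  have h0 : Tendsto (fun n => deriv g (ξ n)) atTop (nhds 0) := by
    simp only [hξd]
    simpa using (hlim.comp (tendsto_atTop_add_const_right _ 1 tendsto_id)).sub hlim
  have h1 : Tendsto (fun n => F (g (ξ n)) - deriv g (ξ n) ^ 2 / 2) atTop (nhds (F 1)) := by
    simpa using ((hF.continuous.tendsto 1).comp (hlim.comp hξtop)).sub ((h0.pow 2).div_const 2)
  refine tendsto_nhds_unique (tendsto_const_nhds.congr fun n => ?_) h1
  exact energy_const hF hg hode t (ξ n)

lemma deriv_deriv_comp_sub_const {F g : ℝ → ℝ} (hode : ∀ t, deriv (deriv g) t = deriv F (g t))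
    (K t : ℝ) : deriv (deriv fun x => g (x - K)) t = deriv F (g (t - K)) := by
  rw [← hode, show (deriv fun x => g (x - K)) = fun x => deriv g (x - K) from
    funext fun x => deriv_comp_sub_const ..]
  exact deriv_comp_sub_const ..

/-- There is no wave rising to `1` from a stationary profile of energy larger than `F 1`. -/
lemma IsSolution.energy_le {F : ℝ → ℝ} {c : ℝ} {u : ℝ → ℝ → ℝ} (hF : ContDiff ℝ 3 F)
    (hF1 : deriv F 1 = 0) (hc : 0 < c) (hu : IsSolution F c u) {g : ℝ → ℝ} (hg : ContDiff ℝ 2 g)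
    (hode : ∀ t, deriv (deriv g) t = deriv F (g t))
    (htop : ∀ x, Tendsto (fun y => u x y) atTop (nhds 1))
    (hbot : ∀ x, Tendsto (fun y => u x y) atBot (nhds (g x))) (t : ℝ) :
    F (g t) - deriv g t ^ 2 / 2 ≤ F 1 := by
  obtain ⟨k, hk, hdef⟩ := hu.energy_deficit_le hF hF1 hc hg hode htop hbot
  by_contra! hlt
  set δ := F (g t) - deriv g t ^ 2 / 2 - F 1 with hδ
  have hδ0 : 0 < δ := by linarith
  have hg1 : ∀ x, -1 ≤ g x := fun x =>
    ge_of_tendsto (hbot x) (Eventually.of_forall fun y => (abs_le.1 (hu.2.2.1 x y)).1)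
  have hcg : Continuous fun x => F (g x) + deriv g x ^ 2 / 2 - F 1 :=
    ((hF.continuous.comp hg.continuous).add
      (((hg.continuous_deriv (by norm_num)).pow 2).div_const 2)).sub continuous_const
  have hb : (0 : ℝ) ≤ 5 * k / δ := by positivity
  have hlow : ∫ _ in (0 : ℝ)..(5 * k / δ), δ ≤
      ∫ x in (0 : ℝ)..(5 * k / δ), (F (g x) + deriv g x ^ 2 / 2 - F 1) :=
    intervalIntegral.integral_mono_on hb intervalIntegrable_const (hcg.intervalIntegrable _ _)
      fun x _ => by
        have := energy_const (hF.differentiable (by simp)) hg hode t x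
        nlinarith [sq_nonneg (deriv g x)]
  have hup := hdef 0 (5 * k / δ) hb
  rw [intervalIntegral.integral_const, sub_zero, smul_eq_mul, div_mul_cancel₀ _ hδ0.ne'] at hlow
  nlinarith [hg1 0, hg1 (5 * k / δ)]

/-- A wave rising to `1` can only start from a profile homoclinic to `1` if the profile is
constant. -/
lemma IsSolution.deriv_eq_zero_of_homoclinic {F : ℝ → ℝ} {c : ℝ} {u : ℝ → ℝ → ℝ}
    (hF : ContDiff ℝ 3 F) (hF1 : deriv F 1 = 0) (hc : 0 < c) (hu : IsSolution F c u) {g : ℝ → ℝ}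
    (hg : ContDiff ℝ 2 g) (hode : ∀ t, deriv (deriv g) t = deriv F (g t))
    (hgtop : Tendsto g atTop (nhds 1)) (hgbot : Tendsto g atBot (nhds 1))
    (htop : ∀ x, Tendsto (fun y => u x y) atTop (nhds 1))
    (hbot : ∀ x, Tendsto (fun y => u x y) atBot (nhds (g x))) (t : ℝ) :
    deriv g t = 0 := by
  obtain ⟨k, hk, hdef⟩ := hu.energy_deficit_le hF hF1 hc hg hode htop hbot
  have hen : ∀ x, F (g x) + deriv g x ^ 2 / 2 - F 1 = deriv g x ^ 2 := fun x => by
    have := energy_eq_of_tendsto (hF.differentiable (by simp)) hg hode hgtop x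
    linarith
  simp only [hen] at hdef
  have hcont : Continuous fun x => deriv g x ^ 2 := (hg.continuous_deriv (by norm_num)).pow 2
  have hlim : Tendsto (fun n : ℝ => k * ((1 - g (-n)) + (1 - g n))) atTop (nhds 0) := by
    simpa using (((hgbot.comp tendsto_neg_atTop_atBot).const_sub 1).add
      (hgtop.const_sub 1)).const_mul k
  by_contra hne
  have hpos : 0 < ∫ x in (t - 1)..(t + 1), deriv g x ^ 2 :=
    intervalIntegral.integral_pos (by linarith) hcont.continuousOn (fun x _ => sq_nonneg _)
      ⟨t, ⟨by linarith, by linarith⟩, by positivity⟩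
  refine absurd (ge_of_tendsto hlim ?_) (not_le.2 hpos)
  filter_upwards [eventually_ge_atTop (|t| + 1)] with n hn
  have h1 := neg_abs_le t
  have h2 := le_abs_self t
  refine le_trans ?_ (hdef (-n) n (by linarith [abs_nonneg t]))
  exact intervalIntegral.integral_mono_interval (by linarith) (by linarith) (by linarith)
    (Eventually.of_forall fun x => sq_nonneg _) (hcont.intervalIntegrable _ _)

lemma DoubleWell.one_lt {F : ℝ → ℝ} (hF : DoubleWell F) {α : ℝ} (h0 : 0 ≤ α) (h1 : α < 1) :
    F 1 < F α := by
  have hanti : StrictAntiOn F (Set.Icc 0 1) :=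
    strictAntiOn_of_deriv_neg (convex_Icc 0 1) hF.1.continuous.continuousOn fun s hs => by
      rw [interior_Icc] at hs
      exact hF.2.2.2.2.2.2.1 s hs
  exact hanti ⟨h0, h1.le⟩ ⟨zero_le_one, le_rfl⟩ h1

/-- Nonexistence of monotone traveling waves going from a periodic profile
`g_α` (or the ground state profile `g_*` in the unbalanced case) at `y = -∞`
up to `1` at `y = +∞` (Theorem 4.2). -/
theorem no_wave_from_unstable_profile_to_one
    (F : ℝ → ℝ) (hF : DoubleWell F) (c : ℝ) (hc : 0 < c) :
    (∀ α : ℝ, 0 ≤ α → α < 1 →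
      ∀ gα : ℝ → ℝ, ContDiff ℝ 2 gα →
        (∀ t : ℝ, deriv (deriv gα) t = deriv F (gα t)) →
        gα 0 = α → deriv gα 0 = 0 →
        ∀ K : ℝ, ¬ ∃ u : ℝ → ℝ → ℝ, IsSolution F c u ∧
          (∀ x : ℝ, Tendsto (fun y => u x y) atTop (nhds 1)) ∧
          (∀ x : ℝ, Tendsto (fun y => u x y) atBot (nhds (gα (x - K))))) ∧
    (0 < F 1 →
      ∀ gs : ℝ → ℝ, ContDiff ℝ 2 gs →
        (∀ t : ℝ, deriv (deriv gs) t = deriv F (gs t)) →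
        (∀ t : ℝ, |gs t| < 1) → deriv gs 0 = 0 →
        Tendsto gs atTop (nhds 1) → Tendsto gs atBot (nhds 1) →
        ∀ K : ℝ, ¬ ∃ u : ℝ → ℝ → ℝ, IsSolution F c u ∧
          (∀ x : ℝ, Tendsto (fun y => u x y) atTop (nhds 1)) ∧
          (∀ x : ℝ, Tendsto (fun y => u x y) atBot (nhds (gs (x - K))))) := by
  have hF3 := hF.1
  have hF1 : deriv F 1 = 0 := hF.2.2.1
  refine ⟨fun α hα0 hα1 g hg hode hg0 hg0' K ⟨u, hu, htop, hbot⟩ => ?_,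
    fun _ g hg hode hg1 _ hgtop hgbot K ⟨u, hu, htop, hbot⟩ => ?_⟩
  · have h := hu.energy_le hF3 hF1 hc (g := fun x => g (x - K))
      (hg.comp (contDiff_id.sub contDiff_const)) (deriv_deriv_comp_sub_const hode K) htop hbot K
    rw [deriv_comp_sub_const] at h
    simp only [sub_self, hg0, hg0'] at h
    have := hF.one_lt hα0 hα1
    linarith
  · have hshift : Tendsto (fun x : ℝ => x - K) atTop atTop :=
      tendsto_atTop_add_const_right _ (-K) tendsto_id
    have hshift' : Tendsto (fun x : ℝ => x - K) atBot atBot :=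
      tendsto_atBot_add_const_right _ (-K) tendsto_id
    have hgK : ContDiff ℝ 2 fun x => g (x - K) := hg.comp (contDiff_id.sub contDiff_const)
    have hzero := hu.deriv_eq_zero_of_homoclinic hF3 hF1 hc hgK
      (deriv_deriv_comp_sub_const hode K) (hgtop.comp hshift) (hgbot.comp hshift') htop hbot
    have hconst : ∀ x, g (x - K) = g (0 - K) := fun x =>
      is_const_of_deriv_eq_zero (hgK.differentiable (by simp)) hzero x 0
    have hlim : Tendsto (fun x => g (x - K)) atTop (nhds 1) := hgtop.comp hshift
    simp only [hconst] at hlim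
    have h1 := tendsto_nhds_unique hlim tendsto_const_nhds
    have h2 := (abs_lt.1 (hg1 (0 - K))).2
    linarith
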